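/- arXiv:1505.01953 — 2 statements merged into one kernel-verified Lean document; each statement's English description precedes it below -/
import Mathlib

section
/- Let X, Y, W be real normed spaces, K : X → Y and A : X → W bounded linear operators, and R : W → ℝ ∪ {+∞}. Define T : Y → [−∞, +∞] by T(v) := inf{ R(A u'') : u'' ∈ X, K u'' = v } (with inf over the empty set equal to +∞). Suppose u ∈ X and ψ ∈ W* satisfy: (i) R(μ) − R(A u) ≥ ψ(μ − A u) for all μ ∈ W (ψ is a subgradient of R at Au); (ii) there exists λ ∈ Y* with λ(K w) = ψ(A w) for all w ∈ X (i.e. A*ψ ∈ range K*); and (iii) R(A u) = T(K u) with R(Au) finite. Then T(K u') − T(K u) ≥ ψ(A(u' − u)) for all u' ∈ X; that is, A*ψ is a subgradient of the composition u ↦ T(K u) at u. -/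
/-!
Two points of a fibre of `K` differ by an element of `ker K`, on which `A*ψ = K*lam` vanishes.
Hence the subgradient inequality for `R ∘ A` at `u` gives one and the same lower bound along the
whole fibre over `K u'`, and this bound passes to the infimum.
-/

/-- The marginal functional (infimal projection) of `f` along `K`, which sends `y` to
`inf {f x : K x = y}`; it takes the value `⊤` off the range of `K`. -/
def marginalFunctional {X Y L : Type*} [InfSet L] (K : X → Y) (f : X → L) (y : Y) : L :=
  sInf {r : L | ∃ x : X, K x = y ∧ r = f x}

section Marginal

variable {X Y L : Type*} [CompleteSemilatticeInf L] (K : X → Y) (f : X → L)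

theorem marginalFunctional_apply_le (x : X) : marginalFunctional K f (K x) ≤ f x :=
  sInf_le ⟨x, rfl, rfl⟩

variable {K f}

theorem le_marginalFunctional {y : Y} {b : L} (h : ∀ x, K x = y → b ≤ f x) :
    b ≤ marginalFunctional K f y :=
  le_sInf <| by
    rintro _ ⟨x, hx, rfl⟩
    exact h x hx

end Marginal

/-- `φ` is a subgradient of the extended-real function `f` at `x`. The inequality
`φ (y - x) ≤ f y - f x` is written without subtraction, which `EReal` defines by convention at
infinite values; functionals are only required to be additive. -/
def IsSubgradientAt {X : Type*} [AddGroup X] (f : X → EReal) (φ : X →+ ℝ) (x : X) : Prop :=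
  ∀ y : X, f x + ((φ (y - x) : ℝ) : EReal) ≤ f y

namespace IsSubgradientAt

variable {X Y W : Type*} [AddGroup X] [AddGroup Y] [AddGroup W]

theorem comp_addMonoidHom {R : W → EReal} {ψ : W →+ ℝ} {A : X →+ W} {u : X}
    (h : IsSubgradientAt R ψ (A u)) : IsSubgradientAt (R ∘ A) (ψ.comp A) u := fun v => by
  simpa only [Function.comp_apply, AddMonoidHom.comp_apply, map_sub] using h (A v)

theorem marginalFunctional_comp {f : X → EReal} {φ : X →+ ℝ} {u : X}
    (h : IsSubgradientAt f φ u) {K : X →+ Y} (hker : K.ker ≤ φ.ker) :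
    IsSubgradientAt (marginalFunctional K f ∘ K) φ u := fun u' =>
  le_marginalFunctional fun v hv => by
    have hφ : φ v = φ u' := by
      have hmem : v - u' ∈ K.ker := by rw [AddMonoidHom.mem_ker, map_sub, hv, sub_self]
      rw [← sub_eq_zero, ← map_sub]
      exact hker hmem
    calc
      marginalFunctional K f (K u) + ((φ (u' - u) : ℝ) : EReal)
          ≤ f u + ((φ (u' - u) : ℝ) : EReal) := by
        gcongr
        exact marginalFunctional_apply_le K f u
      _ = f u + ((φ (v - u) : ℝ) : EReal) := by rw [map_sub, map_sub, hφ]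
      _ ≤ f v := h v

end IsSubgradientAt

theorem marginal_subgradient_general {X Y W : Type*} [AddGroup X] [AddGroup Y] [AddGroup W]
    (K : X →+ Y) (A : X →+ W) (R : W → EReal) (u : X) (ψ : W →+ ℝ)
    (hsub : IsSubgradientAt R ψ (A u)) (hker : K.ker ≤ (ψ.comp A).ker) :
    IsSubgradientAt (marginalFunctional K (R ∘ A) ∘ K) (ψ.comp A) u :=
  hsub.comp_addMonoidHom.marginalFunctional_comp hker

/-- Subgradients of the marginal functional `T(v) = inf { R(A u'') : K u'' = v }`:
if `ψ ∈ W*` is a subgradient of `R` at `A u`, `A*ψ` factors through `K` (i.e.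
`A*ψ ∈ range K*`), and `R(A u) = T(K u)` is finite, then
`T(K u') − T(K u) ≥ ψ(A(u' − u))` for all `u'`. -/
theorem marginal_subgradient
    {X Y W : Type*} [NormedAddCommGroup X] [NormedSpace ℝ X]
    [NormedAddCommGroup Y] [NormedSpace ℝ Y]
    [NormedAddCommGroup W] [NormedSpace ℝ W]
    (K : X →L[ℝ] Y) (A : X →L[ℝ] W)
    (R : W → EReal) (hbot : ∀ w : W, R w ≠ ⊥)
    (u : X) (ψ : W →L[ℝ] ℝ)
    (hsub : ∀ μ' : W, R (A u) + ((ψ (μ' - A u) : ℝ) : EReal) ≤ R μ')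
    (hrange : ∃ lam : Y →L[ℝ] ℝ, ∀ w : X, lam (K w) = ψ (A w))
    (c : ℝ) (hfin : R (A u) = (c : EReal))
    (hmarg : R (A u) = sInf {r : EReal | ∃ u'' : X, K u'' = K u ∧ r = R (A u'')}) :
    ∀ u' : X,
      sInf {r : EReal | ∃ u'' : X, K u'' = K u ∧ r = R (A u'')}
          + ((ψ (A (u' - u)) : ℝ) : EReal)
        ≤ sInf {r : EReal | ∃ u'' : X, K u'' = K u' ∧ r = R (A u'')} := by
  obtain ⟨lam, hlam⟩ := hrange
  exact marginal_subgradient_general (K : X →+ Y) (A : X →+ W) R u (ψ : W →+ ℝ) hsub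
    fun w (hw : K w = 0) => show ψ (A w) = 0 by rw [← hlam, hw, map_zero]
end

section
/- Let X be a real normed space, Y a real normed space, Z a real Hilbert space, K : X → Y and K₀ : X → Z bounded linear operators, C₀ > 0 a constant with ‖K₀ u‖_Z ≤ C₀ ‖K u‖_Y for all u ∈ X, and f₀ ∈ Z. Define F : X → ℝ by F(u) := (1/2)‖K₀ u − f₀‖²_Z. Then for all u, u* ∈ X: ⟨K₀ u* − f₀, K₀(u − u*)⟩_Z ≤ F(u) − F(u*) ≤ ⟨K₀ u* − f₀, K₀(u − u*)⟩_Z + (C₀²/2)‖K(u − u*)‖²_Y. In particular, F is (K,2)-co-coercive and every point of X is (K,2)-minimal for F. -/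
open scoped RealInnerProductSpace

section HalfNormSq

variable {Z : Type*} [SeminormedAddCommGroup Z] [InnerProductSpace ℝ Z]

theorem half_norm_sq_sub_half_norm_sq (x y : Z) :
    (1 / 2) * ‖x‖ ^ 2 - (1 / 2) * ‖y‖ ^ 2 = ⟪y, x - y⟫ + (1 / 2) * ‖x - y‖ ^ 2 := by
  have hexpand : ‖x‖ ^ 2 = ‖y‖ ^ 2 + 2 * ⟪y, x - y⟫ + ‖x - y‖ ^ 2 := by
    rw [← norm_add_sq_real, add_sub_cancel]
  linarith

theorem inner_sub_le_half_norm_sq_sub_half_norm_sq (x y : Z) :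
    ⟪y, x - y⟫ ≤ (1 / 2) * ‖x‖ ^ 2 - (1 / 2) * ‖y‖ ^ 2 := by
  rw [half_norm_sq_sub_half_norm_sq]
  exact le_add_of_nonneg_right (by positivity)

theorem half_norm_sq_sub_half_norm_sq_le_of_norm_sub_le {x y : Z} {r : ℝ} (h : ‖x - y‖ ≤ r) :
    (1 / 2) * ‖x‖ ^ 2 - (1 / 2) * ‖y‖ ^ 2 ≤ ⟪y, x - y⟫ + (1 / 2) * r ^ 2 := by
  rw [half_norm_sq_sub_half_norm_sq]
  gcongr

end HalfNormSq

theorem l2sq_cost_cocoercive_minimal_general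
    {X Y Z 𝓕 : Type*} [AddGroup X] [Norm Y]
    [SeminormedAddCommGroup Z] [InnerProductSpace ℝ Z]
    [FunLike 𝓕 X Z] [AddMonoidHomClass 𝓕 X Z]
    (K : X → Y) (K₀ : 𝓕) (C₀ : ℝ) (hdom : ∀ u : X, ‖K₀ u‖ ≤ C₀ * ‖K u‖) (f₀ : Z)
    (u ustar : X) :
    ⟪K₀ ustar - f₀, K₀ (u - ustar)⟫ ≤
        (1 / 2) * ‖K₀ u - f₀‖ ^ 2 - (1 / 2) * ‖K₀ ustar - f₀‖ ^ 2 ∧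
      (1 / 2) * ‖K₀ u - f₀‖ ^ 2 - (1 / 2) * ‖K₀ ustar - f₀‖ ^ 2 ≤
        ⟪K₀ ustar - f₀, K₀ (u - ustar)⟫ + C₀ ^ 2 / 2 * ‖K (u - ustar)‖ ^ 2 := by
  have hresidual : K₀ (u - ustar) = (K₀ u - f₀) - (K₀ ustar - f₀) := by
    rw [map_sub, sub_sub_sub_cancel_right]
  have hbound : ‖(K₀ u - f₀) - (K₀ ustar - f₀)‖ ≤ C₀ * ‖K (u - ustar)‖ :=
    hresidual ▸ hdom (u - ustar)
  rw [hresidual]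
  refine ⟨inner_sub_le_half_norm_sq_sub_half_norm_sq _ _, ?_⟩
  calc (1 / 2) * ‖K₀ u - f₀‖ ^ 2 - (1 / 2) * ‖K₀ ustar - f₀‖ ^ 2
      ≤ ⟪K₀ ustar - f₀, (K₀ u - f₀) - (K₀ ustar - f₀)⟫
          + (1 / 2) * (C₀ * ‖K (u - ustar)‖) ^ 2 :=
        half_norm_sq_sub_half_norm_sq_le_of_norm_sub_le hbound
    _ = ⟪K₀ ustar - f₀, (K₀ u - f₀) - (K₀ ustar - f₀)⟫
          + C₀ ^ 2 / 2 * ‖K (u - ustar)‖ ^ 2 := by ring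

/-- For `F(u) = ½‖K₀u − f₀‖²_Z` with `Z` Hilbert and `‖K₀u‖ ≤ C₀‖Ku‖`:
`⟪K₀u* − f₀, K₀(u − u*)⟫ ≤ F(u) − F(u*) ≤ ⟪K₀u* − f₀, K₀(u − u*)⟫ + (C₀²/2)‖K(u − u*)‖²`,
i.e. `F` is `(K,2)`-co-coercive and every point is `(K,2)`-minimal. -/
theorem l2sq_cost_cocoercive_minimal
    {X Y Z : Type*} [NormedAddCommGroup X] [NormedSpace ℝ X]
    [NormedAddCommGroup Y] [NormedSpace ℝ Y]
    [NormedAddCommGroup Z] [InnerProductSpace ℝ Z] [CompleteSpace Z]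
    (K : X →L[ℝ] Y) (K₀ : X →L[ℝ] Z) (C₀ : ℝ) (hC₀ : 0 < C₀)
    (hdom : ∀ u : X, ‖K₀ u‖ ≤ C₀ * ‖K u‖) (f₀ : Z) :
    ∀ u ustar : X,
      ⟪K₀ ustar - f₀, K₀ (u - ustar)⟫ ≤
        (1 / 2) * ‖K₀ u - f₀‖ ^ 2 - (1 / 2) * ‖K₀ ustar - f₀‖ ^ 2 ∧
      (1 / 2) * ‖K₀ u - f₀‖ ^ 2 - (1 / 2) * ‖K₀ ustar - f₀‖ ^ 2 ≤
        ⟪K₀ ustar - f₀, K₀ (u - ustar)⟫ + C₀ ^ 2 / 2 * ‖K (u - ustar)‖ ^ 2 :=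
  l2sq_cost_cocoercive_minimal_general K K₀ C₀ hdom f₀
end
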